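/- Let f = x⁴ + y⁴ + z⁴ + x·y²·z² in ℂ[x,y,z], and let J₁ be the ideal of ℂ[[x,y,z]] generated by the images of the twelve polynomials x·f, y·f, z·f, f − x·∂f/∂x, x·∂f/∂y, x·∂f/∂z, y·∂f/∂x, f − y·∂f/∂y, y·∂f/∂z, z·∂f/∂x, z·∂f/∂y, f − z·∂f/∂z. Then the images of the monomials x⁵, y⁵, z⁵, x⁴y, x⁴z, x·y⁴, x·z⁴, y⁴z, y·z⁴ in ℂ[[x,y,z]] all belong to J₁. -/

import Mathlib

open MvPolynomial

/-- The canonical ring homomorphism `ℂ[x,y,z] → ℂ[[x,y,z]]`. -/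
noncomputable def ι : MvPolynomial (Fin 3) ℂ →+* MvPowerSeries (Fin 3) ℂ :=
  MvPolynomial.coeToMvPowerSeries.ringHom

/-- The polynomial `f = x⁴ + y⁴ + z⁴ + x·y²·z²` in `ℂ[x,y,z]`. -/
noncomputable def f : MvPolynomial (Fin 3) ℂ :=
  X 0 ^ 4 + X 1 ^ 4 + X 2 ^ 4 + X 0 * X 1 ^ 2 * X 2 ^ 2

/-- The ideal `J₁` of `ℂ[[x,y,z]]` generated by the images of
`x·f, y·f, z·f` and `δ_{ij}·f − xᵢ·(∂f/∂xⱼ)` for `i, j = 1, 2, 3`. -/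
noncomputable def J₁ : Ideal (MvPowerSeries (Fin 3) ℂ) :=
  Ideal.span
    { ι (X 0 * f), ι (X 1 * f), ι (X 2 * f),
      ι (f - X 0 * pderiv 0 f), ι (X 0 * pderiv 1 f), ι (X 0 * pderiv 2 f),
      ι (X 1 * pderiv 0 f), ι (f - X 1 * pderiv 1 f), ι (X 1 * pderiv 2 f),
      ι (X 2 * pderiv 0 f), ι (X 2 * pderiv 1 f), ι (f - X 2 * pderiv 2 f) }

/-!
Write `x, y, z` for the classes of the variables modulo the ideal. Eliminating `x y³ z` from
`y f_z = 0 = z f_y` gives `2 (4 - x²) y z³ = 0`, and `4 - x²` is a unit of the power series ring,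
so `y z³ = 0`. Substituting this into the other off-diagonal relations kills `y³ z`, `x³ y` and
`x³ z`, while `4 x f - y (x f_y) - z (x f_z) = 4 x⁵` kills `x⁵` and then
`x² y² z² = x (x f_x) - 4 x⁵`, since `x f_x = f` and `x f = 0`. The remaining monomials are read
off from `y f`, `z f`, `x f_y` and `x f_z`.
-/

section EulerIdeal

variable {σ R : Type*} [DecidableEq σ] [CommRing R]

/-- The ideal generated by the `xᵢ g` and the entries `δᵢⱼ g - xᵢ ∂g/∂xⱼ` of the matrix
`g • 1 - x (∇ g)ᵀ`, whose diagonal entries are the defects of the Euler-type equations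
`xᵢ ∂g/∂xᵢ = g`. It is formed in the polynomial ring; the ideal `J₁` is its extension to power
series for `g = f`. -/
noncomputable def eulerIdeal (g : MvPolynomial σ R) : Ideal (MvPolynomial σ R) :=
  Ideal.span (Set.range (fun i => X i * g) ∪
    Set.range fun ij : σ × σ => (if ij.1 = ij.2 then g else 0) - X ij.1 * pderiv ij.2 g)

variable (g : MvPolynomial σ R)

theorem X_mul_self_mem_eulerIdeal (i : σ) : X i * g ∈ eulerIdeal g :=
  Ideal.subset_span (.inl ⟨i, rfl⟩)

theorem self_sub_X_mul_pderiv_mem_eulerIdeal (i : σ) : g - X i * pderiv i g ∈ eulerIdeal g :=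
  Ideal.subset_span (.inr ⟨(i, i), by simp⟩)

theorem X_mul_pderiv_mem_eulerIdeal {i j : σ} (hij : i ≠ j) : X i * pderiv j g ∈ eulerIdeal g :=
  neg_mem_iff.mp (Ideal.subset_span (.inr ⟨(i, j), by simp [hij]⟩))

end EulerIdeal

section DeformedFermat

variable (R : Type*) [CommRing R]

/-- The polynomial `x⁴ + y⁴ + z⁴ + x y² z²` over an arbitrary coefficient ring. -/
noncomputable def deformedFermat : MvPolynomial (Fin 3) R :=
  X 0 ^ 4 + X 1 ^ 4 + X 2 ^ 4 + X 0 * X 1 ^ 2 * X 2 ^ 2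

theorem pderiv_zero_deformedFermat :
    pderiv 0 (deformedFermat R) = 4 * X 0 ^ 3 + X 1 ^ 2 * X 2 ^ 2 := by
  simp only [deformedFermat, map_add, Derivation.leibniz, Derivation.leibniz_pow, pderiv_X,
    Pi.single_apply, Fin.reduceEq, ↓reduceIte, smul_eq_mul]
  ring

theorem pderiv_one_deformedFermat :
    pderiv 1 (deformedFermat R) = 4 * X 1 ^ 3 + 2 * X 0 * X 1 * X 2 ^ 2 := by
  simp only [deformedFermat, map_add, Derivation.leibniz, Derivation.leibniz_pow, pderiv_X,
    Pi.single_apply, Fin.reduceEq, ↓reduceIte, smul_eq_mul]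
  ring

theorem pderiv_two_deformedFermat :
    pderiv 2 (deformedFermat R) = 4 * X 2 ^ 3 + 2 * X 0 * X 1 ^ 2 * X 2 := by
  simp only [deformedFermat, map_add, Derivation.leibniz, Derivation.leibniz_pow, pderiv_X,
    Pi.single_apply, Fin.reduceEq, ↓reduceIte, smul_eq_mul]
  ring

end DeformedFermat

/-- The relations satisfied by `x, y, z` when the generators of `eulerIdeal (deformedFermat R)`
vanish at `(x, y, z)`, written out so that they can be combined linearly; `f_x, f_y, f_z` in the
field names are the partial derivatives of `f = deformedFermat R`. The diagonal relations
`f = y f_y` and `f = z f_z` are left out. -/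
structure EulerRelations {Q : Type*} [CommRing Q] (x y z : Q) : Prop where
  x_mul_f : x * (x ^ 4 + y ^ 4 + z ^ 4 + x * y ^ 2 * z ^ 2) = 0
  y_mul_f : y * (x ^ 4 + y ^ 4 + z ^ 4 + x * y ^ 2 * z ^ 2) = 0
  z_mul_f : z * (x ^ 4 + y ^ 4 + z ^ 4 + x * y ^ 2 * z ^ 2) = 0
  f_sub_x_mul_fx : x ^ 4 + y ^ 4 + z ^ 4 + x * y ^ 2 * z ^ 2 - x * (4 * x ^ 3 + y ^ 2 * z ^ 2) = 0
  x_mul_fy : x * (4 * y ^ 3 + 2 * x * y * z ^ 2) = 0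
  x_mul_fz : x * (4 * z ^ 3 + 2 * x * y ^ 2 * z) = 0
  y_mul_fx : y * (4 * x ^ 3 + y ^ 2 * z ^ 2) = 0
  y_mul_fz : y * (4 * z ^ 3 + 2 * x * y ^ 2 * z) = 0
  z_mul_fx : z * (4 * x ^ 3 + y ^ 2 * z ^ 2) = 0
  z_mul_fy : z * (4 * y ^ 3 + 2 * x * y * z ^ 2) = 0

namespace EulerRelations

theorem of_eulerIdeal_le_ker {R Q : Type*} [CommRing R] [CommRing Q]
    {φ : MvPolynomial (Fin 3) R →+* Q} (hφ : eulerIdeal (deformedFermat R) ≤ RingHom.ker φ) :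
    EulerRelations (φ (X 0)) (φ (X 1)) (φ (X 2)) := by
  have X_mul_f (i : Fin 3) := hφ (X_mul_self_mem_eulerIdeal _ i)
  have f_sub := hφ (self_sub_X_mul_pderiv_mem_eulerIdeal _ 0)
  have X_mul_fx (i : Fin 3) (hi : i ≠ 0) := hφ (X_mul_pderiv_mem_eulerIdeal _ hi)
  have X_mul_fy (i : Fin 3) (hi : i ≠ 1) := hφ (X_mul_pderiv_mem_eulerIdeal _ hi)
  have X_mul_fz (i : Fin 3) (hi : i ≠ 2) := hφ (X_mul_pderiv_mem_eulerIdeal _ hi)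
  rw [pderiv_zero_deformedFermat] at f_sub
  simp only [pderiv_zero_deformedFermat] at X_mul_fx
  simp only [pderiv_one_deformedFermat] at X_mul_fy
  simp only [pderiv_two_deformedFermat] at X_mul_fz
  simp only [deformedFermat, RingHom.mem_ker, map_add, map_sub, map_mul, map_pow, map_ofNat]
    at X_mul_f f_sub X_mul_fx X_mul_fy X_mul_fz
  exact
    { x_mul_f := X_mul_f 0
      y_mul_f := X_mul_f 1
      z_mul_f := X_mul_f 2
      f_sub_x_mul_fx := f_sub
      x_mul_fy := X_mul_fy 0 (by decide)
      x_mul_fz := X_mul_fz 0 (by decide)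
      y_mul_fx := X_mul_fx 1 (by decide)
      y_mul_fz := X_mul_fz 1 (by decide)
      z_mul_fx := X_mul_fx 2 (by decide)
      z_mul_fy := X_mul_fy 2 (by decide) }

variable {Q : Type*} [CommRing Q] {x y z : Q}

theorem y_mul_z_pow_three_eq_zero (h : EulerRelations x y z) (h2 : IsUnit (2 : Q))
    (hx : IsUnit (4 - x ^ 2)) : y * z ^ 3 = 0 :=
  (h2.mul hx).mul_right_eq_zero.mp (by linear_combination 2 * h.y_mul_fz - x * h.z_mul_fy)

theorem y_pow_three_mul_z_eq_zero (h : EulerRelations x y z) (h2 : IsUnit (2 : Q))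
    (hx : IsUnit (4 - x ^ 2)) : y ^ 3 * z = 0 :=
  (h2.mul h2).mul_right_eq_zero.mp (by
    linear_combination h.z_mul_fy - 2 * x * h.y_mul_z_pow_three_eq_zero h2 hx)

theorem x_pow_three_mul_y_eq_zero (h : EulerRelations x y z) (h2 : IsUnit (2 : Q))
    (hx : IsUnit (4 - x ^ 2)) : x ^ 3 * y = 0 :=
  (h2.mul h2).mul_right_eq_zero.mp (by
    linear_combination h.y_mul_fx - z * h.y_pow_three_mul_z_eq_zero h2 hx)

theorem x_pow_three_mul_z_eq_zero (h : EulerRelations x y z) (h2 : IsUnit (2 : Q))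
    (hx : IsUnit (4 - x ^ 2)) : x ^ 3 * z = 0 :=
  (h2.mul h2).mul_right_eq_zero.mp (by
    linear_combination h.z_mul_fx - y * h.y_mul_z_pow_three_eq_zero h2 hx)

theorem x_pow_five_eq_zero (h : EulerRelations x y z) (h2 : IsUnit (2 : Q)) : x ^ 5 = 0 :=
  (h2.mul h2).mul_right_eq_zero.mp (by
    linear_combination 4 * h.x_mul_f - y * h.x_mul_fy - z * h.x_mul_fz)

theorem y_pow_five_eq_zero (h : EulerRelations x y z) (h2 : IsUnit (2 : Q))
    (hx : IsUnit (4 - x ^ 2)) : y ^ 5 = 0 := by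
  linear_combination h.y_mul_f - x * h.x_pow_three_mul_y_eq_zero h2 hx
    - z * h.y_mul_z_pow_three_eq_zero h2 hx - x * z * h.y_pow_three_mul_z_eq_zero h2 hx

theorem z_pow_five_eq_zero (h : EulerRelations x y z) (h2 : IsUnit (2 : Q))
    (hx : IsUnit (4 - x ^ 2)) : z ^ 5 = 0 := by
  linear_combination h.z_mul_f - x * h.x_pow_three_mul_z_eq_zero h2 hx
    - y * h.y_pow_three_mul_z_eq_zero h2 hx - x * y * h.y_mul_z_pow_three_eq_zero h2 hx

theorem x_sq_mul_y_sq_mul_z_sq_eq_zero (h : EulerRelations x y z) (h2 : IsUnit (2 : Q)) :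
    x ^ 2 * y ^ 2 * z ^ 2 = 0 := by
  linear_combination h.x_mul_f - x * h.f_sub_x_mul_fx - 4 * h.x_pow_five_eq_zero h2

theorem x_mul_y_pow_four_eq_zero (h : EulerRelations x y z) (h2 : IsUnit (2 : Q)) : x * y ^ 4 = 0 :=
  (h2.mul h2).mul_right_eq_zero.mp (by
    linear_combination y * h.x_mul_fy - 2 * h.x_sq_mul_y_sq_mul_z_sq_eq_zero h2)

theorem x_mul_z_pow_four_eq_zero (h : EulerRelations x y z) (h2 : IsUnit (2 : Q)) : x * z ^ 4 = 0 :=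
  (h2.mul h2).mul_right_eq_zero.mp (by
    linear_combination z * h.x_mul_fz - 2 * h.x_sq_mul_y_sq_mul_z_sq_eq_zero h2)

end EulerRelations

theorem eulerIdeal_le_comap_J₁ : eulerIdeal (deformedFermat ℂ) ≤ J₁.comap ι := by
  change eulerIdeal f ≤ J₁.comap ι
  refine Ideal.span_le.mpr ?_
  rintro _ (⟨i, rfl⟩ | ⟨⟨i, j⟩, rfl⟩)
  · exact Ideal.subset_span (by fin_cases i <;> simp)
  · rcases eq_or_ne i j with rfl | hij
    · exact Ideal.subset_span (by fin_cases i <;> simp)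
    · simp only [hij, ↓reduceIte, zero_sub, SetLike.mem_coe, neg_mem_iff]
      refine Ideal.subset_span ?_
      fin_cases i <;> fin_cases j <;> first | exact absurd rfl hij | simp

theorem isUnit_four_sub_X_sq {σ R : Type*} [CommRing R] (h4 : IsUnit (4 : R)) (i : σ) :
    IsUnit (4 - MvPowerSeries.X i ^ 2 : MvPowerSeries σ R) := by
  rw [MvPowerSeries.isUnit_iff_constantCoeff, map_sub, map_pow, map_ofNat,
    MvPowerSeries.constantCoeff_X]
  simpa using h4

theorem stmt_9_general {R A : Type*} [CommRing R] [CommRing A] (φ : MvPolynomial (Fin 3) R →+* A)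
    {J : Ideal A} (hJ : eulerIdeal (deformedFermat R) ≤ J.comap φ) (h2 : IsUnit (2 : A))
    (hx : IsUnit (4 - φ (X 0) ^ 2)) :
    φ (X 0 ^ 5) ∈ J ∧ φ (X 1 ^ 5) ∈ J ∧ φ (X 2 ^ 5) ∈ J ∧
    φ (X 0 ^ 4 * X 1) ∈ J ∧ φ (X 0 ^ 4 * X 2) ∈ J ∧
    φ (X 0 * X 1 ^ 4) ∈ J ∧ φ (X 0 * X 2 ^ 4) ∈ J ∧
    φ (X 1 ^ 4 * X 2) ∈ J ∧ φ (X 1 * X 2 ^ 4) ∈ J := by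
  let π := Ideal.Quotient.mk J
  have h : EulerRelations (π (φ (X 0))) (π (φ (X 1))) (π (φ (X 2))) :=
    .of_eulerIdeal_le_ker (φ := π.comp φ) fun q hq =>
      Ideal.Quotient.eq_zero_iff_mem.mpr (hJ hq)
  replace h2 : IsUnit (2 : A ⧸ J) := by simpa only [map_ofNat] using h2.map π
  replace hx : IsUnit (4 - π (φ (X 0)) ^ 2) := by
    simpa only [map_sub, map_pow, map_ofNat] using hx.map π
  simp only [← Ideal.Quotient.eq_zero_iff_mem, map_mul, map_pow]
  refine ⟨h.x_pow_five_eq_zero h2, h.y_pow_five_eq_zero h2 hx, h.z_pow_five_eq_zero h2 hx, ?_, ?_,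
    h.x_mul_y_pow_four_eq_zero h2, h.x_mul_z_pow_four_eq_zero h2, ?_, ?_⟩
  · linear_combination π (φ (X 0)) * h.x_pow_three_mul_y_eq_zero h2 hx
  · linear_combination π (φ (X 0)) * h.x_pow_three_mul_z_eq_zero h2 hx
  · linear_combination π (φ (X 1)) * h.y_pow_three_mul_z_eq_zero h2 hx
  · linear_combination π (φ (X 2)) * h.y_mul_z_pow_three_eq_zero h2 hx

theorem stmt_9 :
    ι (X 0 ^ 5) ∈ J₁ ∧ ι (X 1 ^ 5) ∈ J₁ ∧ ι (X 2 ^ 5) ∈ J₁ ∧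
    ι (X 0 ^ 4 * X 1) ∈ J₁ ∧ ι (X 0 ^ 4 * X 2) ∈ J₁ ∧
    ι (X 0 * X 1 ^ 4) ∈ J₁ ∧ ι (X 0 * X 2 ^ 4) ∈ J₁ ∧
    ι (X 1 ^ 4 * X 2) ∈ J₁ ∧ ι (X 1 * X 2 ^ 4) ∈ J₁ := by
  have h2 : IsUnit (2 : MvPowerSeries (Fin 3) ℂ) := by
    simpa only [map_ofNat] using (IsUnit.mk0 (2 : ℂ) two_ne_zero).map MvPowerSeries.C
  exact stmt_9_general ι eulerIdeal_le_comap_J₁ h2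
    (by simpa [ι] using isUnit_four_sub_X_sq (IsUnit.mk0 (4 : ℂ) (by norm_num)) (0 : Fin 3))
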